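/- arXiv:2209.14726 — 3 statements merged into one kernel-verified Lean document; each statement's English description precedes it below -/
import Mathlib

section
/- For the double gamma density f_0, the moment generating function m_0(u) = ∫_ℝ e^{u x} f_0(x) dx ∈ [0,∞] is finite if and only if −λ_- < u < λ_+, in which case m_0(u) = (a/(a+b))·(λ_- /(λ_- + u))^{cT} + (b/(a+b))·(λ_+/(λ_+ − u))^{cT}. In particular, sup{ r ∈ ℝ : m_0(r) < ∞ } = λ_+ < ∞, and m_0(u) = m_0(1 − u) for all u ∈ ℝ (as an equality in [0,∞]). -/
open MeasureTheory

/-- Mixture weight `a = (1 + μ/(2λ))^{cT}`. -/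
noncomputable def mixA (c lam mu T : ℝ) : ℝ := (1 + mu / (2 * lam)) ^ (c * T)

/-- Mixture weight `b = (1 - μ/(2λ))^{cT}`. -/
noncomputable def mixB (c lam mu T : ℝ) : ℝ := (1 - mu / (2 * lam)) ^ (c * T)

/-- `λ₊ = λ/μ + 1/2`. -/
noncomputable def lamPlus (lam mu : ℝ) : ℝ := lam / mu + 1 / 2

/-- `λ₋ = λ/μ - 1/2`. -/
noncomputable def lamMinus (lam mu : ℝ) : ℝ := lam / mu - 1 / 2

/-- The asymmetric double gamma density. -/
noncomputable def doubleGamma (c lam mu T x : ℝ) : ℝ :=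
  if x < 0 then
    (mixA c lam mu T / (mixA c lam mu T + mixB c lam mu T)) *
      (lamMinus lam mu ^ (c * T) / Real.Gamma (c * T)) * (-x) ^ (c * T - 1) *
      Real.exp (lamMinus lam mu * x)
  else if 0 < x then
    (mixB c lam mu T / (mixA c lam mu T + mixB c lam mu T)) *
      (lamPlus lam mu ^ (c * T) / Real.Gamma (c * T)) * x ^ (c * T - 1) *
      Real.exp (-lamPlus lam mu * x)
  else 0

/-- Moment generating function of the double gamma density, valued in `[0,∞]`. -/
noncomputable def doubleGammaMgf (c lam mu T u : ℝ) : ENNReal :=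
  ∫⁻ x, ENNReal.ofReal (Real.exp (u * x) * doubleGamma c lam mu T x)

/-!
Away from `0` the density is a mixture of a reflected gamma density of rate `λ₋` and a gamma density
of rate `λ₊`, so its moment generating function is the same mixture of gamma ones at `-u` and `u`.
Exponential tilting turns `x^{s-1} e^{-rx}` into `x^{s-1} e^{-(r-u)x}`, which is integrable on
`(0,∞)` exactly when `u < r`, and is then a multiple of the gamma density of rate `r - u`. The
symmetry about `u = 1/2` comes from `f₀(-x) = eˣ f₀(x)`, where `a λ₋^{cT} = b λ₊^{cT}` matches the
two constants.
-/

open Set ProbabilityTheory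

theorem ofReal_mul_lt_top_iff {w : ℝ} {m : ENNReal} (hw : 0 < w) :
    ENNReal.ofReal w * m < ⊤ ↔ m < ⊤ := by
  simp [lt_top_iff_ne_top, ENNReal.mul_eq_top, hw]

theorem setLIntegral_Ioi_rpow_eq_top (s : ℝ) :
    ∫⁻ x in Ioi (0 : ℝ), ENNReal.ofReal (x ^ s) = ⊤ := by
  by_contra hfin
  have hnonneg : 0 ≤ᵐ[volume.restrict (Ioi (0 : ℝ))] fun x : ℝ => x ^ s :=
    (ae_restrict_mem measurableSet_Ioi).mono fun x hx => Real.rpow_nonneg (le_of_lt hx) s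
  have hmeas : Measurable fun x : ℝ => x ^ s := by fun_prop
  exact not_integrableOn_Ioi_rpow s
    ⟨hmeas.aestronglyMeasurable, (hasFiniteIntegral_iff_ofReal hnonneg).mpr (Ne.lt_top hfin)⟩

section GammaMgf

/-- The moment generating function `u ↦ ∫ e^{ux} f(x) dx` of the gamma density `f` of shape `a` and
rate `r`. It takes values in `[0,∞]`, so that divergence shows up as the value `⊤`. -/
noncomputable def gammaMgf (a r u : ℝ) : ENNReal :=
  ∫⁻ x, ENNReal.ofReal (Real.exp (u * x) * gammaPDFReal a r x)

variable {a r u : ℝ}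

theorem exp_mul_gammaPDFReal_eq (hr : 0 ≤ r) (hu : u < r) (x : ℝ) :
    Real.exp (u * x) * gammaPDFReal a r x = (r / (r - u)) ^ a * gammaPDFReal a (r - u) x := by
  have hru : 0 < r - u := sub_pos.mpr hu
  have hexp : Real.exp (-((r - u) * x)) = Real.exp (u * x) * Real.exp (-(r * x)) := by
    rw [← Real.exp_add]
    ring_nf
  unfold gammaPDFReal
  split_ifs
  · rw [hexp, Real.div_rpow hr hru.le]
    field_simp
  · simp only [mul_zero]

theorem gammaMgf_of_lt (ha : 0 < a) (hr : 0 ≤ r) (hu : u < r) :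
    gammaMgf a r u = ENNReal.ofReal ((r / (r - u)) ^ a) := by
  have hru : 0 < r - u := sub_pos.mpr hu
  calc gammaMgf a r u
      = ∫⁻ x, ENNReal.ofReal ((r / (r - u)) ^ a) * gammaPDF a (r - u) x := by
        refine lintegral_congr fun x => ?_
        rw [exp_mul_gammaPDFReal_eq hr hu, ENNReal.ofReal_mul (by positivity), gammaPDF]
    _ = ENNReal.ofReal ((r / (r - u)) ^ a) := by
        rw [lintegral_const_mul' _ _ ENNReal.ofReal_ne_top, lintegral_gammaPDF_eq_one ha hru,
          mul_one]

theorem gammaMgf_of_le (ha : 0 < a) (hr : 0 < r) (hu : r ≤ u) : gammaMgf a r u = ⊤ := by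
  have hK : 0 < r ^ a / Real.Gamma a := by positivity
  have hbound : ∀ x ∈ Ioi (0 : ℝ),
      r ^ a / Real.Gamma a * x ^ (a - 1) ≤ Real.exp (u * x) * gammaPDFReal a r x := by
    intro x (hx : 0 < x)
    have hexp : 1 ≤ Real.exp (u * x) * Real.exp (-(r * x)) := by
      rw [← Real.exp_add]
      exact Real.one_le_exp (by nlinarith)
    calc r ^ a / Real.Gamma a * x ^ (a - 1)
        ≤ r ^ a / Real.Gamma a * x ^ (a - 1) * (Real.exp (u * x) * Real.exp (-(r * x))) :=
          le_mul_of_one_le_right (by positivity) hexp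
      _ = Real.exp (u * x) * gammaPDFReal a r x := by
          rw [gammaPDFReal, if_pos hx.le]
          ring
  refine top_unique ?_
  calc ⊤ = ∫⁻ x in Ioi (0 : ℝ), ENNReal.ofReal (r ^ a / Real.Gamma a * x ^ (a - 1)) := by
        simp_rw [ENNReal.ofReal_mul hK.le]
        rw [lintegral_const_mul' _ _ ENNReal.ofReal_ne_top, setLIntegral_Ioi_rpow_eq_top,
          ENNReal.mul_top (ENNReal.ofReal_pos.mpr hK).ne']
    _ ≤ ∫⁻ x in Ioi (0 : ℝ), ENNReal.ofReal (Real.exp (u * x) * gammaPDFReal a r x) :=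
        setLIntegral_mono' measurableSet_Ioi fun x hx => ENNReal.ofReal_le_ofReal (hbound x hx)
    _ ≤ gammaMgf a r u := setLIntegral_le_lintegral _ _

theorem gammaMgf_lt_top_iff (ha : 0 < a) (hr : 0 < r) : gammaMgf a r u < ⊤ ↔ u < r := by
  refine ⟨fun h => ?_, fun hu => ?_⟩
  · contrapose! h
    exact (gammaMgf_of_le ha hr h).ge
  · rw [gammaMgf_of_lt ha hr.le hu]
    exact ENNReal.ofReal_lt_top

end GammaMgf

section DoubleGamma

variable {c lam mu T u : ℝ}

theorem lamPlus_eq_lamMinus_add_one (lam mu : ℝ) : lamPlus lam mu = lamMinus lam mu + 1 := by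
  unfold lamPlus lamMinus
  ring

theorem lamMinus_pos (hmu : 0 < mu) (h : mu < 2 * lam) : 0 < lamMinus lam mu := by
  have : 1 / 2 < lam / mu := by
    rw [lt_div_iff₀ hmu]
    linarith
  exact sub_pos.mpr this

theorem lamPlus_pos (hmu : 0 < mu) (h : mu < 2 * lam) : 0 < lamPlus lam mu := by
  rw [lamPlus_eq_lamMinus_add_one]
  exact add_pos (lamMinus_pos hmu h) one_pos

theorem mixA_pos (hmu : 0 < mu) (h : mu < 2 * lam) : 0 < mixA c lam mu T := by
  have : 0 < 2 * lam := hmu.trans h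
  unfold mixA
  positivity

theorem mixB_pos (hmu : 0 < mu) (h : mu < 2 * lam) : 0 < mixB c lam mu T :=
  Real.rpow_pos_of_pos (sub_pos.mpr ((div_lt_one (hmu.trans h)).mpr h)) _

theorem mixA_mul_lamMinus_rpow (hmu : 0 < mu) (h : mu < 2 * lam) :
    mixA c lam mu T * lamMinus lam mu ^ (c * T) = mixB c lam mu T * lamPlus lam mu ^ (c * T) := by
  have hlam : 0 < lam := by linarith
  have hratio : mu / (2 * lam) < 1 := (div_lt_one (hmu.trans h)).mpr h
  have hbase : (1 + mu / (2 * lam)) * lamMinus lam mu = (1 - mu / (2 * lam)) * lamPlus lam mu := by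
    unfold lamMinus lamPlus
    field_simp
  rw [mixA, mixB, ← Real.mul_rpow (by positivity) (lamMinus_pos hmu h).le,
    ← Real.mul_rpow (sub_nonneg.mpr hratio.le) (lamPlus_pos hmu h).le, hbase]

theorem doubleGamma_neg_of_pos (hmu : 0 < mu) (h : mu < 2 * lam) {x : ℝ} (hx : 0 < x) :
    doubleGamma c lam mu T (-x) = Real.exp x * doubleGamma c lam mu T x := by
  have hexp : Real.exp (lamMinus lam mu * -x) = Real.exp x * Real.exp (-lamPlus lam mu * x) := by
    rw [← Real.exp_add, lamPlus_eq_lamMinus_add_one]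
    ring_nf
  have hconst : mixA c lam mu T / (mixA c lam mu T + mixB c lam mu T) *
        (lamMinus lam mu ^ (c * T) / Real.Gamma (c * T)) =
      mixB c lam mu T / (mixA c lam mu T + mixB c lam mu T) *
        (lamPlus lam mu ^ (c * T) / Real.Gamma (c * T)) := by
    rw [div_mul_div_comm, div_mul_div_comm, mixA_mul_lamMinus_rpow hmu h]
  rw [doubleGamma, doubleGamma, if_pos (neg_lt_zero.mpr hx), if_neg hx.not_gt, if_pos hx, neg_neg,
    hexp, hconst]
  ring

theorem doubleGamma_neg (hmu : 0 < mu) (h : mu < 2 * lam) (x : ℝ) :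
    doubleGamma c lam mu T (-x) = Real.exp x * doubleGamma c lam mu T x := by
  rcases lt_trichotomy x 0 with hx | rfl | hx
  · have hneg := doubleGamma_neg_of_pos (c := c) (T := T) hmu h (neg_pos.mpr hx)
    rw [neg_neg] at hneg
    rw [hneg, ← mul_assoc, ← Real.exp_add, add_neg_cancel, Real.exp_zero, one_mul]
  · rw [neg_zero, Real.exp_zero, one_mul]
  · exact doubleGamma_neg_of_pos hmu h hx

theorem doubleGammaMgf_one_sub (hmu : 0 < mu) (h : mu < 2 * lam) (u : ℝ) :
    doubleGammaMgf c lam mu T (1 - u) = doubleGammaMgf c lam mu T u := by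
  unfold doubleGammaMgf
  rw [← lintegral_neg_eq_self fun x => ENNReal.ofReal (Real.exp (u * x) * doubleGamma c lam mu T x)]
  refine lintegral_congr fun x => ?_
  rw [doubleGamma_neg hmu h, ← mul_assoc, ← Real.exp_add]
  ring_nf

theorem doubleGamma_eq_add_gammaPDFReal {x : ℝ} (hx : x ≠ 0) :
    doubleGamma c lam mu T x =
      mixA c lam mu T / (mixA c lam mu T + mixB c lam mu T) *
          gammaPDFReal (c * T) (lamMinus lam mu) (-x) +
        mixB c lam mu T / (mixA c lam mu T + mixB c lam mu T) *
          gammaPDFReal (c * T) (lamPlus lam mu) x := by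
  unfold doubleGamma gammaPDFReal
  rcases hx.lt_or_gt with hneg | hpos
  · rw [if_pos hneg, if_pos (neg_nonneg.mpr hneg.le), if_neg hneg.not_ge, mul_neg, neg_neg]
    ring
  · rw [if_neg hpos.not_gt, if_pos hpos, if_neg (by linarith), if_pos hpos.le, neg_mul]
    ring

theorem doubleGammaMgf_eq_add_gammaMgf (hs : 0 < c * T) (hmu : 0 < mu) (h : mu < 2 * lam) (u : ℝ) :
    doubleGammaMgf c lam mu T u =
      ENNReal.ofReal (mixA c lam mu T / (mixA c lam mu T + mixB c lam mu T)) *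
          gammaMgf (c * T) (lamMinus lam mu) (-u) +
        ENNReal.ofReal (mixB c lam mu T / (mixA c lam mu T + mixB c lam mu T)) *
          gammaMgf (c * T) (lamPlus lam mu) u := by
  have ha : 0 < mixA c lam mu T := mixA_pos hmu h
  have hb : 0 < mixB c lam mu T := mixB_pos hmu h
  have hpdfMinus := gammaPDFReal_nonneg hs (lamMinus_pos hmu h)
  have hpdfPlus := gammaPDFReal_nonneg hs (lamPlus_pos hmu h)
  have hreflect : gammaMgf (c * T) (lamMinus lam mu) (-u) =
      ∫⁻ x, ENNReal.ofReal (Real.exp (u * x) * gammaPDFReal (c * T) (lamMinus lam mu) (-x)) := by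
    rw [gammaMgf, ← lintegral_neg_eq_self]
    simp only [neg_mul_neg]
  rw [hreflect, gammaMgf, ← lintegral_const_mul' _ _ ENNReal.ofReal_ne_top,
    ← lintegral_const_mul' _ _ ENNReal.ofReal_ne_top, ← lintegral_add_left (by fun_prop)]
  refine lintegral_congr_ae ?_
  filter_upwards [Measure.ae_ne volume (0 : ℝ)] with x hx
  specialize hpdfMinus (-x)
  specialize hpdfPlus x
  rw [doubleGamma_eq_add_gammaPDFReal hx, ← ENNReal.ofReal_mul (by positivity),
    ← ENNReal.ofReal_mul (by positivity), ← ENNReal.ofReal_add (by positivity) (by positivity)]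
  ring_nf

theorem doubleGammaMgf_lt_top_iff (hs : 0 < c * T) (hmu : 0 < mu) (h : mu < 2 * lam) :
    doubleGammaMgf c lam mu T u < ⊤ ↔ -lamMinus lam mu < u ∧ u < lamPlus lam mu := by
  have ha : 0 < mixA c lam mu T := mixA_pos hmu h
  have hb : 0 < mixB c lam mu T := mixB_pos hmu h
  rw [doubleGammaMgf_eq_add_gammaMgf hs hmu h, ENNReal.add_lt_top,
    ofReal_mul_lt_top_iff (by positivity), ofReal_mul_lt_top_iff (by positivity),
    gammaMgf_lt_top_iff hs (lamMinus_pos hmu h), gammaMgf_lt_top_iff hs (lamPlus_pos hmu h),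
    neg_lt]

theorem doubleGammaMgf_eq_ofReal (hs : 0 < c * T) (hmu : 0 < mu) (h : mu < 2 * lam)
    (hu : -lamMinus lam mu < u) (hu' : u < lamPlus lam mu) :
    doubleGammaMgf c lam mu T u = ENNReal.ofReal
      (mixA c lam mu T / (mixA c lam mu T + mixB c lam mu T) *
          (lamMinus lam mu / (lamMinus lam mu + u)) ^ (c * T) +
        mixB c lam mu T / (mixA c lam mu T + mixB c lam mu T) *
          (lamPlus lam mu / (lamPlus lam mu - u)) ^ (c * T)) := by
  have ha : 0 < mixA c lam mu T := mixA_pos hmu h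
  have hb : 0 < mixB c lam mu T := mixB_pos hmu h
  have hm : 0 < lamMinus lam mu := lamMinus_pos hmu h
  have hp : 0 < lamPlus lam mu := lamPlus_pos hmu h
  have hmu_add : 0 < lamMinus lam mu + u := neg_lt_iff_pos_add'.mp hu
  rw [doubleGammaMgf_eq_add_gammaMgf hs hmu h, gammaMgf_of_lt hs hm.le (neg_lt.mp hu),
    gammaMgf_of_lt hs hp.le hu', sub_neg_eq_add, ENNReal.ofReal_add (by positivity) (by positivity),
    ENNReal.ofReal_mul (by positivity), ENNReal.ofReal_mul (by positivity)]

theorem sSup_doubleGammaMgf_lt_top (hs : 0 < c * T) (hmu : 0 < mu) (h : mu < 2 * lam) :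
    sSup {r : ℝ | doubleGammaMgf c lam mu T r < ⊤} = lamPlus lam mu := by
  have hIoo : {r : ℝ | doubleGammaMgf c lam mu T r < ⊤} =
      Ioo (-lamMinus lam mu) (lamPlus lam mu) :=
    Set.ext fun _ => doubleGammaMgf_lt_top_iff hs hmu h
  rw [hIoo, csSup_Ioo (by linarith [lamMinus_pos hmu h, lamPlus_pos hmu h])]

end DoubleGamma

/-- **MGF of the double gamma density:** finiteness exactly on `(−λ₋, λ₊)`, the explicit
formula there, `sup{r : m₀(r) < ∞} = λ₊ < ∞`, and the symmetry `m₀(u) = m₀(1−u)`. -/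
theorem doubleGamma_mgf
    (c lam mu T : ℝ)
    (hc : 0 < c) (hlam : 0 < lam) (hmu : 0 < mu) (hT : 0 < T)
    (hmu2lam : mu < 2 * lam) :
    (∀ u : ℝ, doubleGammaMgf c lam mu T u < ⊤ ↔
        -lamMinus lam mu < u ∧ u < lamPlus lam mu) ∧
    (∀ u : ℝ, -lamMinus lam mu < u → u < lamPlus lam mu →
      doubleGammaMgf c lam mu T u = ENNReal.ofReal
        ((mixA c lam mu T / (mixA c lam mu T + mixB c lam mu T)) *
            (lamMinus lam mu / (lamMinus lam mu + u)) ^ (c * T) +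
         (mixB c lam mu T / (mixA c lam mu T + mixB c lam mu T)) *
            (lamPlus lam mu / (lamPlus lam mu - u)) ^ (c * T))) ∧
    sSup {r : ℝ | doubleGammaMgf c lam mu T r < ⊤} = lamPlus lam mu ∧
    (∀ u : ℝ, doubleGammaMgf c lam mu T u = doubleGammaMgf c lam mu T (1 - u)) := by
  have hs : 0 < c * T := mul_pos hc hT
  exact ⟨fun _ => doubleGammaMgf_lt_top_iff hs hmu hmu2lam,
    fun _ => doubleGammaMgf_eq_ofReal hs hmu hmu2lam,
    sSup_doubleGammaMgf_lt_top hs hmu hmu2lam,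
    fun u => (doubleGammaMgf_one_sub hmu hmu2lam u).symm⟩
end

section
/- With f_v and f_0 as defined (with the same parameters c, λ, μ, T), for every x ∈ ℝ with x ≠ 0 one has the pointwise convergence lim_{v → 0+} f_v(x) = f_0(x). -/
/-!
A variance-gamma density at `y` is the integral over time `l > 0` of a gamma density `g l` against
the density at `y` of the normal law `N(m l, v² l)`. If the drift `m` points towards `y`, then as
`v → 0⁺` the latter, viewed as a function of `l`, concentrates at the time `y / m` at which the
drift alone reaches `y`, with limiting mass `|m|⁻¹`, as the substitution `l = (y - v z) / m` shows;
so the integral tends to `|m|⁻¹ * g (y / m)`. If the drift points away from `y`, the integral tends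
to `0`. All of this allows `m` to converge as `v → 0⁺` instead of being constant, and applying it
to `m = ±μ - v² / 2` gives the claim, because multiplying a gamma variable by `μ` divides
its rate by `μ`.
-/

open MeasureTheory

/-- Density of the variance-gamma component `X^+_T`. -/
noncomputable def vgPlus (c lam mu T v x : ℝ) : ℝ :=
  ∫ l in Set.Ioi (0 : ℝ),
    (Real.sqrt (2 * Real.pi * v ^ 2 * l))⁻¹ *
      Real.exp (-(x - (mu - v ^ 2 / 2) * l) ^ 2 / (2 * v ^ 2 * l)) *
      ((lam + mu / 2) ^ (c * T) / Real.Gamma (c * T)) * l ^ (c * T - 1) *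
      Real.exp (-(lam + mu / 2) * l)

/-- Density of the variance-gamma component `X^-_T`. -/
noncomputable def vgMinus (c lam mu T v x : ℝ) : ℝ :=
  ∫ l in Set.Ioi (0 : ℝ),
    (Real.sqrt (2 * Real.pi * v ^ 2 * l))⁻¹ *
      Real.exp (-(x - (-mu - v ^ 2 / 2) * l) ^ 2 / (2 * v ^ 2 * l)) *
      ((lam - mu / 2) ^ (c * T) / Real.Gamma (c * T)) * l ^ (c * T - 1) *
      Real.exp (-(lam - mu / 2) * l)

/-- Density of the variance-gamma mixture model (for `v > 0`). -/
noncomputable def vgMix (c lam mu T v x : ℝ) : ℝ :=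
  (mixA c lam mu T * vgMinus c lam mu T v x + mixB c lam mu T * vgPlus c lam mu T v x) /
    (mixA c lam mu T + mixB c lam mu T)

open Filter ProbabilityTheory Set Topology

/-- The density at `y` of a Brownian motion with drift `m` and volatility `v` at time `l`, that is,
of the normal law with mean `m l` and variance `v² l`. It is `0` for `v = 0` or `l ≤ 0`. -/
noncomputable def brownianDensity (m v l y : ℝ) : ℝ :=
  (√(2 * Real.pi * v ^ 2 * l))⁻¹ * Real.exp (-(y - m * l) ^ 2 / (2 * v ^ 2 * l))

lemma brownianDensity_nonneg (m v l y : ℝ) : 0 ≤ brownianDensity m v l y := by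
  unfold brownianDensity
  positivity

lemma measurable_brownianDensity (m v y : ℝ) : Measurable fun l ↦ brownianDensity m v l y := by
  unfold brownianDensity
  fun_prop

lemma continuousAt_brownianDensity_time (m y : ℝ) {v l : ℝ} (hv : v ≠ 0) (hl : 0 < l) :
    ContinuousAt (fun t ↦ brownianDensity m v t y) l := by
  unfold brownianDensity
  fun_prop (disch := positivity)

lemma integral_brownianDensity (m : ℝ) {v l : ℝ} (hv : v ≠ 0) (hl : 0 < l) :
    ∫ y, brownianDensity m v l y = 1 := by
  have hvar : 0 < v ^ 2 * l := by positivity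
  have := integral_gaussianPDFReal_eq_one (m * l) (Real.toNNReal_pos.mpr hvar).ne'
  simpa only [brownianDensity, gaussianPDFReal, Real.coe_toNNReal _ hvar.le, ← mul_assoc] using this

lemma brownianDensity_eq_inv_mul_standard (m l y : ℝ) {v : ℝ} (hv : 0 < v) :
    brownianDensity m v l y = v⁻¹ * brownianDensity 0 1 l ((y - m * l) / v) := by
  have hsqrt : √(2 * Real.pi * v ^ 2 * l) = v * √(2 * Real.pi * l) := by
    rw [show 2 * Real.pi * v ^ 2 * l = v ^ 2 * (2 * Real.pi * l) by ring,
      Real.sqrt_mul (sq_nonneg v), Real.sqrt_sq hv.le]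
  have hexp : -(y - m * l) ^ 2 / (2 * v ^ 2 * l) = -((y - m * l) / v) ^ 2 / (2 * l) := by
    field_simp
  simp only [brownianDensity, hsqrt, hexp, mul_inv, one_pow, mul_one, zero_mul, sub_zero]
  ring

/-! ### Concentration at the hitting time of the drift -/

lemma brownianDensity_zero_one_le {l z : ℝ} (hl : 0 < l) (hz : z ≠ 0) :
    brownianDensity 0 1 l z ≤ (1 + l) / z ^ 2 := by
  have hprefactor : (√(2 * Real.pi * l))⁻¹ ≤ (√l)⁻¹ := by
    gcongr
    nlinarith [Real.pi_gt_three]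
  have hexp : Real.exp (-z ^ 2 / (2 * l)) ≤ (z ^ 2 / (2 * l))⁻¹ := by
    rw [neg_div, Real.exp_neg]
    gcongr
    linarith [Real.add_one_le_exp (z ^ 2 / (2 * l))]
  calc brownianDensity 0 1 l z
      = (√(2 * Real.pi * l))⁻¹ * Real.exp (-z ^ 2 / (2 * l)) := by simp [brownianDensity]
    _ ≤ (√l)⁻¹ * (z ^ 2 / (2 * l))⁻¹ := by gcongr
    _ = 2 * √l / z ^ 2 := by
      field_simp
      exact (Real.sq_sqrt hl.le).symm
    _ ≤ (1 + l) / z ^ 2 := by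
      gcongr
      nlinarith [sq_nonneg (√l - 1), Real.sq_sqrt hl.le]

lemma brownianDensity_le_div_sq {m v l y κ : ℝ} (hv : 0 < v) (hl : 0 < l) (hκ : 0 < κ)
    (hfar : κ * (1 + l) ≤ |y - m * l|) : brownianDensity m v l y ≤ v / κ ^ 2 := by
  have hpos : 0 < |y - m * l| := lt_of_lt_of_le (by positivity) hfar
  calc brownianDensity m v l y
      ≤ v⁻¹ * ((1 + l) / ((y - m * l) / v) ^ 2) := by
        rw [brownianDensity_eq_inv_mul_standard m l y hv]
        gcongr
        exact brownianDensity_zero_one_le hl (div_ne_zero (abs_pos.mp hpos) hv.ne')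
    _ = v * (1 + l) / |y - m * l| ^ 2 := by
        rw [div_pow, ← sq_abs (y - m * l)]
        field_simp
    _ ≤ v * (1 + l) ^ 2 / (κ * (1 + l)) ^ 2 := by
        gcongr
        nlinarith
    _ = v / κ ^ 2 := by field_simp

lemma exists_mul_one_add_le_abs_sub {m y : ℝ} (hm : m ≠ 0) {u : Set ℝ} (hu : u ∈ 𝓝 (y / m)) :
    ∃ κ > 0, ∀ l ∉ u, κ * (1 + l) ≤ |y - m * l| := by
  obtain ⟨ε, hε, hball⟩ := Metric.mem_nhds_iff.mp hu
  refine ⟨|m| / ((1 + |y / m|) / ε + 1), by positivity, fun l hlu ↦ ?_⟩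
  have hdist : ε ≤ |l - y / m| := by
    simpa [Real.dist_eq] using fun h ↦ hlu (hball h)
  have hgrowth : 1 + l ≤ ((1 + |y / m|) / ε + 1) * |l - y / m| :=
    calc 1 + l ≤ (1 + |y / m|) * 1 + |l - y / m| := by
          linarith [le_abs_self (l - y / m), le_abs_self (y / m)]
      _ ≤ (1 + |y / m|) * (|l - y / m| / ε) + |l - y / m| := by
          gcongr
          rwa [one_le_div hε]
      _ = _ := by ring
  calc |m| / ((1 + |y / m|) / ε + 1) * (1 + l)
      ≤ |m| / ((1 + |y / m|) / ε + 1) * (((1 + |y / m|) / ε + 1) * |l - y / m|) := by gcongr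
    _ = |m * (l - y / m)| := by
        rw [abs_mul]
        field_simp
    _ = |y - m * l| := by rw [mul_sub, mul_div_cancel₀ _ hm, abs_sub_comm]

section VanishingVolatility

variable {E : Type*} [NormedAddCommGroup E] [NormedSpace ℝ E] {m : ℝ → ℝ} {m₀ y : ℝ} {g : ℝ → E}

lemma tendstoUniformlyOn_brownianDensity (hm : Tendsto m (𝓝[>] 0) (𝓝 m₀)) (hm₀ : m₀ ≠ 0)
    {u : Set ℝ} (hu : u ∈ 𝓝 (y / m₀)) :
    TendstoUniformlyOn (fun v l ↦ brownianDensity (m v) v l y) 0 (𝓝[>] 0) (Ioi 0 \ u) := by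
  obtain ⟨κ, hκ, hfar⟩ := exists_mul_one_add_le_abs_sub hm₀ hu
  have hbound : Tendsto (fun v : ℝ ↦ v / (κ / 2) ^ 2) (𝓝[>] 0) (𝓝 0) :=
    tendsto_nhdsWithin_of_tendsto_nhds (Continuous.tendsto' (by fun_prop) _ _ (zero_div _))
  rw [Metric.tendstoUniformlyOn_iff]
  intro η hη
  filter_upwards [self_mem_nhdsWithin, hbound.eventually_lt_const hη,
    hm.eventually (Metric.ball_mem_nhds m₀ (half_pos hκ))] with v (hv : 0 < v) hvη hmv l hl
  have hl₀ : 0 < l := hl.1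
  -- The error `(m v - m₀) * l` is not uniformly small, but a lower bound linear in `l` absorbs it.
  have hdrift : |m v - m₀| * l ≤ κ / 2 * (1 + l) := by
    gcongr
    · exact (Real.dist_eq _ _ ▸ hmv).le
    · linarith
  have hfar' : κ / 2 * (1 + l) ≤ |y - m v * l| := by
    have := abs_sub_le (y - m₀ * l) (y - m v * l) 0
    rw [show y - m₀ * l - (y - m v * l) = (m v - m₀) * l by ring, abs_mul, abs_of_pos hl₀,
      sub_zero, sub_zero] at this
    linarith [hfar l hl.2]
  rw [Pi.zero_apply, dist_zero_left, Real.norm_of_nonneg (brownianDensity_nonneg ..)]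
  exact (brownianDensity_le_div_sq hv hl₀ (half_pos hκ) hfar').trans_lt hvη

lemma setIntegral_brownianDensity_eq {m v : ℝ} (hm : m ≠ 0) (hv : 0 < v) (y : ℝ) {s : Set ℝ}
    (hs : MeasurableSet s) :
    ∫ l in s, brownianDensity m v l y =
      |m|⁻¹ * ∫ z, s.indicator (fun l ↦ brownianDensity 0 1 l z) ((y - v * z) / m) := by
  have hscale (f : ℝ → ℝ) : ∫ z, f ((y - v * z) / m) = |m| * v⁻¹ * ∫ l, f l := by
    calc ∫ z, f ((y - v * z) / m) = ∫ z, f (y / m - v / m * z) := by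
          simp_rw [sub_div, mul_div_right_comm]
      _ = |m| * v⁻¹ * ∫ l, f l := by
          rw [Measure.integral_comp_mul_left (fun w ↦ f (y / m - w)),
            integral_sub_left_eq_self f volume, inv_div, abs_div, abs_of_pos hv, smul_eq_mul,
            div_eq_mul_inv]
  have hintegrand (z : ℝ) : s.indicator (fun l ↦ brownianDensity 0 1 l z) ((y - v * z) / m) =
      v * s.indicator (fun l ↦ brownianDensity m v l y) ((y - v * z) / m) := by
    simp only [indicator, brownianDensity_eq_inv_mul_standard m _ y hv, mul_ite, mul_zero]
    rw [mul_inv_cancel_left₀ hv.ne', mul_div_cancel₀ _ hm, sub_sub_cancel,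
      mul_div_cancel_left₀ _ hv.ne']
  simp_rw [hintegrand]
  rw [integral_const_mul, hscale, integral_indicator hs]
  field_simp

lemma brownianDensity_zero_one_le_of_mem_Ioo {a b l : ℝ} (ha : 0 < a) (hl : l ∈ Ioo a b) (z : ℝ) :
    brownianDensity 0 1 l z ≤ (√(2 * Real.pi * a))⁻¹ * Real.exp (-(2 * b)⁻¹ * z ^ 2) := by
  have hl₀ : 0 < l := ha.trans hl.1
  simp only [brownianDensity, one_pow, mul_one, zero_mul, sub_zero]
  rw [neg_div, div_eq_inv_mul, ← neg_mul]
  gcongr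
  exacts [hl.1.le, hl.2.le]

lemma tendsto_integral_indicator_Ioo_brownianDensity_zero_one {ι : Type*} {F : Filter ι}
    [F.IsCountablyGenerated] {τ : ι → ℝ → ℝ} {l₀ a b : ℝ} (hτ : ∀ i, Measurable (τ i))
    (hτl₀ : ∀ z, Tendsto (fun i ↦ τ i z) F (𝓝 l₀)) (ha : 0 < a) (hl₀ : l₀ ∈ Ioo a b) :
    Tendsto (fun i ↦ ∫ z, (Ioo a b).indicator (fun l ↦ brownianDensity 0 1 l z) (τ i z)) F
      (𝓝 1) := by
  have hl₀pos : 0 < l₀ := ha.trans hl₀.1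
  have hb : 0 < b := hl₀pos.trans hl₀.2
  rw [← congrArg 𝓝 (integral_brownianDensity 0 one_ne_zero hl₀pos)]
  refine tendsto_integral_filter_of_dominated_convergence
    (fun z ↦ (√(2 * Real.pi * a))⁻¹ * Real.exp (-(2 * b)⁻¹ * z ^ 2))
    (.of_forall fun i ↦ ?_) (.of_forall fun i ↦ .of_forall fun z ↦ ?_)
    ((integrable_exp_neg_mul_sq (by positivity)).const_mul _) (.of_forall fun z ↦ ?_)
  · simp only [indicator, brownianDensity]
    exact (Measurable.ite (measurableSet_Ioo.preimage (hτ i)) (by fun_prop)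
      (by fun_prop)).aestronglyMeasurable
  · rw [norm_indicator_eq_indicator_norm]
    refine indicator_apply_le' (fun hl ↦ ?_) (fun _ ↦ by positivity)
    rw [Real.norm_of_nonneg (brownianDensity_nonneg ..)]
    exact brownianDensity_zero_one_le_of_mem_Ioo ha hl z
  · refine ((continuousAt_brownianDensity_time 0 z one_ne_zero hl₀pos).tendsto.comp
      (hτl₀ z)).congr' ?_
    filter_upwards [(hτl₀ z).eventually_mem (Ioo_mem_nhds hl₀.1 hl₀.2)] with i hi
    rw [indicator_of_mem hi, Function.comp_apply]

lemma tendsto_setIntegral_Ioo_brownianDensity (hm : Tendsto m (𝓝[>] 0) (𝓝 m₀)) (hm₀ : m₀ ≠ 0)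
    {a b : ℝ} (ha : 0 < a) (hy : y / m₀ ∈ Ioo a b) :
    Tendsto (fun v ↦ ∫ l in Ioo a b, brownianDensity (m v) v l y) (𝓝[>] 0) (𝓝 |m₀|⁻¹) := by
  have hpoint (z : ℝ) : Tendsto (fun v ↦ (y - v * z) / m v) (𝓝[>] 0) (𝓝 (y / m₀)) := by
    refine Tendsto.div ?_ hm hm₀
    exact tendsto_nhdsWithin_of_tendsto_nhds (Continuous.tendsto' (by fun_prop) _ _ (by simp))
  have hlim := (hm.abs.inv₀ (abs_ne_zero.mpr hm₀)).mul
    (tendsto_integral_indicator_Ioo_brownianDensity_zero_one (by fun_prop) hpoint ha hy)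
  rw [mul_one] at hlim
  refine hlim.congr' ?_
  filter_upwards [self_mem_nhdsWithin, hm.eventually_ne hm₀] with v hv hmv
  exact (setIntegral_brownianDensity_eq hmv hv y measurableSet_Ioo).symm

theorem tendsto_setIntegral_brownianDensity_smul_of_div_pos [CompleteSpace E]
    (hm : Tendsto m (𝓝[>] 0) (𝓝 m₀)) (hy : 0 < y / m₀) (hg : IntegrableOn g (Ioi 0))
    (hgy : ContinuousAt g (y / m₀)) :
    Tendsto (fun v ↦ ∫ l in Ioi 0, brownianDensity (m v) v l y • g l) (𝓝[>] 0)
      (𝓝 (|m₀|⁻¹ • g (y / m₀))) := by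
  have hm₀ : m₀ ≠ 0 := (div_ne_zero_iff.mp hy.ne').2
  have hmem : y / m₀ ∈ Ioo (y / m₀ / 2) (2 * (y / m₀)) := ⟨by linarith, by linarith⟩
  have huniform (u : Set ℝ) (hu : IsOpen u) (hyu : y / m₀ ∈ u) :
      TendstoUniformlyOn (fun v l ↦ |m₀| * brownianDensity (m v) v l y) 0 (𝓝[>] 0)
        (Ioi 0 \ u) := by
    simpa [Function.comp_def, Pi.zero_def] using
      (uniformContinuous_const_smul |m₀|).comp_tendstoUniformlyOn
        (tendstoUniformlyOn_brownianDensity hm hm₀ (hu.mem_nhds hyu))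
  have hmass : Tendsto (fun v ↦ ∫ l in Ioo (y / m₀ / 2) (2 * (y / m₀)),
      |m₀| * brownianDensity (m v) v l y) (𝓝[>] 0) (𝓝 1) := by
    simp_rw [integral_const_mul]
    simpa [hm₀] using
      (tendsto_setIntegral_Ioo_brownianDensity hm hm₀ (half_pos hy) hmem).const_mul |m₀|
  have hpeak := tendsto_setIntegral_peak_smul_of_integrableOn_of_tendsto measurableSet_Ioi
    measurableSet_Ioo (fun l hl ↦ (half_pos hy).trans hl.1)
    (mem_nhdsWithin_of_mem_nhds (Ioo_mem_nhds hmem.1 hmem.2)) measure_Ioo_lt_top.ne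
    (.of_forall fun v l _ ↦ mul_nonneg (abs_nonneg m₀) (brownianDensity_nonneg ..))
    huniform hmass
    (.of_forall fun v ↦
      ((measurable_brownianDensity (m v) v y).const_mul |m₀|).aestronglyMeasurable)
    hg hgy.continuousWithinAt.tendsto
  refine (hpeak.const_smul |m₀|⁻¹).congr fun v ↦ ?_
  simp_rw [mul_smul, integral_smul]
  exact inv_smul_smul₀ (abs_ne_zero.mpr hm₀) _

theorem tendsto_setIntegral_brownianDensity_smul_of_div_neg
    (hm : Tendsto m (𝓝[>] 0) (𝓝 m₀)) (hy : y / m₀ < 0) (hg : IntegrableOn g (Ioi 0)) :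
    Tendsto (fun v ↦ ∫ l in Ioi 0, brownianDensity (m v) v l y • g l) (𝓝[>] 0) (𝓝 0) := by
  have hm₀ : m₀ ≠ 0 := (div_ne_zero_iff.mp hy.ne).2
  have huniform : TendstoUniformlyOn (fun v l ↦ brownianDensity (m v) v l y) 0 (𝓝[>] 0)
      (Ioi 0) :=
    (tendstoUniformlyOn_brownianDensity hm hm₀ (Iio_mem_nhds hy)).mono
      fun l (hl : 0 < l) ↦ ⟨hl, hl.le.not_gt⟩
  rw [← integral_zero ℝ E (μ := volume.restrict (Ioi 0))]
  refine tendsto_integral_filter_of_dominated_convergence (fun l ↦ ‖g l‖)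
    (.of_forall fun v ↦ (measurable_brownianDensity (m v) v y).aestronglyMeasurable.smul hg.1)
    ?_ hg.norm ?_
  · filter_upwards [Metric.tendstoUniformlyOn_iff.mp huniform 1 one_pos] with v hv
    filter_upwards [ae_restrict_mem measurableSet_Ioi] with l hl
    have hle : ‖brownianDensity (m v) v l y‖ ≤ 1 := by simpa using (hv l hl).le
    rw [norm_smul]
    exact mul_le_of_le_one_left (norm_nonneg _) hle
  · filter_upwards [ae_restrict_mem measurableSet_Ioi] with l hl
    simpa using (huniform.tendsto_at hl).smul_const (g l)

end VanishingVolatility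

/-! ### Gamma densities -/

lemma gammaPDFReal_of_neg (p r : ℝ) {x : ℝ} (hx : x < 0) : gammaPDFReal p r x = 0 :=
  if_neg hx.not_ge

lemma integrable_gammaPDFReal {p r : ℝ} (hp : 0 < p) (hr : 0 < r) :
    Integrable (gammaPDFReal p r) := by
  rw [← lintegral_ofReal_ne_top_iff_integrable
    (stronglyMeasurable_gammaPDFReal p r).aestronglyMeasurable
    (.of_forall (gammaPDFReal_nonneg hp hr))]
  exact (lintegral_gammaPDF_eq_one hp hr).trans_ne ENNReal.one_ne_top

lemma continuousAt_gammaPDFReal (p r : ℝ) {x : ℝ} (hx : 0 < x) :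
    ContinuousAt (gammaPDFReal p r) x := by
  have hcont : ContinuousAt
      (fun t ↦ r ^ p / Real.Gamma p * t ^ (p - 1) * Real.exp (-(r * t))) x := by
    have := hx.ne'
    fun_prop (disch := simp [*])
  refine hcont.congr ?_
  filter_upwards [lt_mem_nhds hx] with t ht
  exact (if_pos ht.le).symm

lemma inv_mul_gammaPDFReal_div (p x : ℝ) {r k : ℝ} (hr : 0 ≤ r) (hk : 0 < k) :
    k⁻¹ * gammaPDFReal p r (x / k) = gammaPDFReal p (r / k) x := by
  rcases lt_or_ge x 0 with hx | hx
  · rw [gammaPDFReal_of_neg p r (div_neg_of_neg_of_pos hx hk), gammaPDFReal_of_neg p _ hx, mul_zero]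
  · have := (Real.rpow_pos_of_pos hk p).ne'
    rw [gammaPDFReal, gammaPDFReal, if_pos (div_nonneg hx hk.le), if_pos hx,
      Real.div_rpow hx hk.le, Real.div_rpow hr hk.le, Real.rpow_sub_one hk.ne']
    field_simp

theorem tendsto_setIntegral_brownianDensity_mul_gammaPDFReal {m : ℝ → ℝ} {m₀ y p r : ℝ}
    (hm : Tendsto m (𝓝[>] 0) (𝓝 m₀)) (hm₀ : m₀ ≠ 0) (hy : y ≠ 0) (hp : 0 < p) (hr : 0 < r) :
    Tendsto (fun v ↦ ∫ l in Ioi 0, brownianDensity (m v) v l y * gammaPDFReal p r l) (𝓝[>] 0)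
      (𝓝 (|m₀|⁻¹ * gammaPDFReal p r (y / m₀))) := by
  have hg : IntegrableOn (gammaPDFReal p r) (Ioi 0) := (integrable_gammaPDFReal hp hr).integrableOn
  rcases (div_ne_zero hy hm₀).lt_or_gt with hneg | hpos
  · rw [gammaPDFReal_of_neg p r hneg, mul_zero]
    exact tendsto_setIntegral_brownianDensity_smul_of_div_neg hm hneg hg
  · exact tendsto_setIntegral_brownianDensity_smul_of_div_pos hm hpos hg
      (continuousAt_gammaPDFReal p r hpos)

/-! ### The variance-gamma mixture -/

lemma vgPlus_eq_setIntegral (c lam mu T v x : ℝ) :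
    vgPlus c lam mu T v x = ∫ l in Ioi 0,
      brownianDensity (mu - v ^ 2 / 2) v l x * gammaPDFReal (c * T) (lam + mu / 2) l := by
  refine setIntegral_congr_fun measurableSet_Ioi fun l (hl : 0 < l) ↦ ?_
  simp only [brownianDensity, gammaPDFReal, if_pos hl.le, neg_mul, mul_assoc]

lemma vgMinus_eq_vgPlus_neg (c lam mu T v x : ℝ) :
    vgMinus c lam mu T v x = vgPlus c lam (-mu) T v x := by
  simp only [vgMinus, vgPlus, neg_div, sub_eq_add_neg]

lemma tendsto_vgPlus {c lam mu T x : ℝ} (hcT : 0 < c * T) (hmu : mu ≠ 0)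
    (hrate : 0 < lam + mu / 2) (hx : x ≠ 0) :
    Tendsto (fun v ↦ vgPlus c lam mu T v x) (𝓝[>] 0)
      (𝓝 (|mu|⁻¹ * gammaPDFReal (c * T) (lam + mu / 2) (x / mu))) := by
  have hdrift : Tendsto (fun v : ℝ ↦ mu - v ^ 2 / 2) (𝓝[>] 0) (𝓝 mu) :=
    tendsto_nhdsWithin_of_tendsto_nhds (Continuous.tendsto' (by fun_prop) _ _ (by simp))
  simp_rw [vgPlus_eq_setIntegral]
  exact tendsto_setIntegral_brownianDensity_mul_gammaPDFReal hdrift hmu hx hcT hrate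

lemma tendsto_vgPlus_gammaPDFReal_lamPlus {c lam mu T x : ℝ} (hcT : 0 < c * T) (hmu : 0 < mu)
    (hrate : 0 < lam + mu / 2) (hx : x ≠ 0) :
    Tendsto (fun v ↦ vgPlus c lam mu T v x) (𝓝[>] 0)
      (𝓝 (gammaPDFReal (c * T) (lamPlus lam mu) x)) := by
  have hlamPlus : lamPlus lam mu = (lam + mu / 2) / mu := by
    rw [lamPlus]
    field_simp
  rw [hlamPlus, ← inv_mul_gammaPDFReal_div (c * T) x hrate.le hmu]
  simpa only [abs_of_pos hmu] using tendsto_vgPlus hcT hmu.ne' hrate hx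

lemma tendsto_vgMinus_gammaPDFReal_lamMinus {c lam mu T x : ℝ} (hcT : 0 < c * T) (hmu : 0 < mu)
    (hrate : 0 < lam - mu / 2) (hx : x ≠ 0) :
    Tendsto (fun v ↦ vgMinus c lam mu T v x) (𝓝[>] 0)
      (𝓝 (gammaPDFReal (c * T) (lamMinus lam mu) (-x))) := by
  have hlamMinus : lamMinus lam mu = (lam - mu / 2) / mu := by
    rw [lamMinus]
    field_simp
  have hrate' : lam + -mu / 2 = lam - mu / 2 := by ring
  rw [hlamMinus, ← inv_mul_gammaPDFReal_div (c * T) (-x) hrate.le hmu]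
  simp_rw [vgMinus_eq_vgPlus_neg]
  have hlim := tendsto_vgPlus hcT (neg_ne_zero.mpr hmu.ne') (hrate'.symm ▸ hrate) hx
  rwa [hrate', abs_neg, abs_of_pos hmu, div_neg, ← neg_div] at hlim

lemma doubleGamma_eq_mixture (c lam mu T : ℝ) {x : ℝ} (hx : x ≠ 0) :
    doubleGamma c lam mu T x =
      (mixA c lam mu T * gammaPDFReal (c * T) (lamMinus lam mu) (-x) +
        mixB c lam mu T * gammaPDFReal (c * T) (lamPlus lam mu) x) /
      (mixA c lam mu T + mixB c lam mu T) := by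
  rcases hx.lt_or_gt with hneg | hpos
  · rw [doubleGamma, if_pos hneg, gammaPDFReal_of_neg _ _ hneg, gammaPDFReal,
      if_pos (neg_nonneg.mpr hneg.le), mul_neg, neg_neg]
    ring
  · rw [doubleGamma, if_neg hpos.not_gt, if_pos hpos, gammaPDFReal_of_neg _ _ (neg_neg_of_pos hpos),
      gammaPDFReal, if_pos hpos.le, neg_mul]
    ring

/-- **Pointwise convergence of the variance-gamma mixture densities to the double gamma
density as `v → 0⁺`**, at every `x ≠ 0`. -/
theorem vgMix_tendsto_doubleGamma_pointwise
    (c lam mu T : ℝ)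
    (hc : 0 < c) (hlam : 0 < lam) (hmu : 0 < mu) (hT : 0 < T)
    (hmu2lam : mu < 2 * lam) :
    ∀ x : ℝ, x ≠ 0 →
      Filter.Tendsto (fun v => vgMix c lam mu T v x) (nhdsWithin 0 (Set.Ioi 0))
        (nhds (doubleGamma c lam mu T x)) := by
  intro x hx
  have hcT : 0 < c * T := mul_pos hc hT
  have hplus : Tendsto (fun v ↦ vgPlus c lam mu T v x) (𝓝[>] 0)
      (𝓝 (gammaPDFReal (c * T) (lamPlus lam mu) x)) :=
    tendsto_vgPlus_gammaPDFReal_lamPlus hcT hmu (by linarith) hx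
  have hminus : Tendsto (fun v ↦ vgMinus c lam mu T v x) (𝓝[>] 0)
      (𝓝 (gammaPDFReal (c * T) (lamMinus lam mu) (-x))) :=
    tendsto_vgMinus_gammaPDFReal_lamMinus hcT hmu (by linarith) hx
  rw [doubleGamma_eq_mixture c lam mu T hx]
  exact ((hminus.const_mul _).add (hplus.const_mul _)).div_const _
end

section
/- Let f be a continuous probability density on ℝ, let σ : (0,∞) → (0,∞) be continuous with C(K) = C_BS(K, σ(K)) for all K > 0, and let σ_* > 0. Assume there is a nonempty open interval I ⊂ ℝ with f(x) ≠ φ_{σ_*}(x) for all x ∈ I. Then for every n ≥ 0: if there exist points 0 < K_0 < K_1 < ... < K_n with (σ(K_i) − σ_*)·(σ(K_{i+1}) − σ_*) < 0 for all i (i.e., σ − σ_* has at least n sign changes), then there exist points x_0 < x_1 < ... < x_{n+2} in ℝ with (f(x_j) − φ_{σ_*}(x_j))·(f(x_{j+1}) − φ_{σ_*}(x_{j+1})) < 0 for all j (i.e., f − φ_{σ_*} has at least n + 2 sign changes). -/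
open MeasureTheory

/-- Standard normal cumulative distribution function. -/
noncomputable def stdNormalCDF (x : ℝ) : ℝ :=
  (Real.sqrt (2 * Real.pi))⁻¹ * ∫ t in Set.Iic x, Real.exp (-t ^ 2 / 2)

/-- Black–Scholes call price with `S₀ = 1` and total volatility `σ`. -/
noncomputable def callBS (K σ : ℝ) : ℝ :=
  stdNormalCDF (-Real.log K / σ + σ / 2) - K * stdNormalCDF (-Real.log K / σ - σ / 2)

/-- Call price associated to a log-price density `f` (with `S₀ = 1`). -/
noncomputable def callPrice (f : ℝ → ℝ) (K : ℝ) : ℝ :=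
  ∫ x in Set.Ioi (Real.log K), (Real.exp x - K) * f x

/-- Risk-neutral log-price density of the Black–Scholes model with volatility `σ`. -/
noncomputable def phiBS (σ x : ℝ) : ℝ :=
  (Real.sqrt (2 * Real.pi) * σ)⁻¹ * Real.exp (-(x / σ + σ / 2) ^ 2 / 2)

/-!
Let `d k` be the difference of the two call prices at log-strike `k`. Black–Scholes prices
increase strictly with volatility, so `d` has the sign of `σ - σ_*`. The bounds
`1 - K ≤ C_BS(K, σ(K)) ≤ 1` force `∫ e^x f(x) dx = 1`, so `d` vanishes at `±∞`. Two
applications of Rolle's theorem on the whole line produce two more sign changes: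
`d' k = -exp k * G k` with `G k = ∫_k^∞ (f - φ)`, then `G` vanishes at `±∞` because both
densities have mass one, and `G' = -(f - φ)`.
-/

open Filter ProbabilityTheory Set Topology

lemma mul_neg_of_mul_pos_of_mul_neg {R : Type*} [CommRing R] [LinearOrder R]
    [IsStrictOrderedRing R] {a b c : R} (hac : 0 < a * c) (hbc : b * c < 0) : a * b < 0 := by
  have : a * b * (c * c) < 0 := by
    rw [mul_mul_mul_comm]
    exact mul_neg_of_pos_of_neg hac hbc
  exact neg_of_mul_neg_left this (mul_self_nonneg c)

/-- `h` has at least `n` sign changes: it alternates in sign along `n + 1` increasing points.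
The condition `h (x i) ≠ 0` only matters for `n = 0`, where it says that `h` is not zero. -/
def HasSignChanges {α : Type*} [Preorder α] (h : α → ℝ) (n : ℕ) : Prop :=
  ∃ x : Fin (n + 1) → α, StrictMono x ∧ (∀ i, h (x i) ≠ 0) ∧
    ∀ i : Fin n, h (x i.castSucc) * h (x i.succ) < 0

namespace HasSignChanges

section Preorder

variable {α : Type*} [Preorder α] {h : α → ℝ} {n : ℕ}

lemma of_mul_neg (h_ne : ∃ y, h y ≠ 0) {x : Fin (n + 1) → α} (hx : StrictMono x)
    (hneg : ∀ i : Fin n, h (x i.castSucc) * h (x i.succ) < 0) : HasSignChanges h n := by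
  cases n with
  | zero =>
    obtain ⟨y, hy⟩ := h_ne
    exact ⟨fun _ => y, Fin.strictMono_iff_lt_succ.2 finZeroElim, fun _ => hy, finZeroElim⟩
  | succ n =>
    refine ⟨x, hx, Fin.cases ?_ fun j => ?_, hneg⟩
    · exact left_ne_zero_of_mul (hneg 0).ne
    · exact right_ne_zero_of_mul (hneg j).ne

lemma of_mul_left {c : α → ℝ} (hc : ∀ x y, 0 < c x * c y)
    (H : HasSignChanges (fun x => c x * h x) n) : HasSignChanges h n := by
  obtain ⟨x, hx, h_ne, hneg⟩ := H
  refine ⟨x, hx, fun i => right_ne_zero_of_mul (h_ne i), fun i => ?_⟩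
  have := hneg i
  rw [mul_mul_mul_comm] at this
  exact neg_of_mul_neg_right this (hc _ _).le

end Preorder

section Deriv

variable {h h' : ℝ → ℝ}

lemma exists_mem_Ioo_deriv_mul_pos {a b c : ℝ} (hd : ∀ x, HasDerivAt h (h' x) x) (hab : a < b)
    (hc : 0 < (h b - h a) * c) : ∃ y ∈ Ioo a b, 0 < h' y * c := by
  obtain ⟨y, hy, hslope⟩ := exists_hasDerivAt_eq_slope h h' hab
    (fun x _ => (hd x).continuousAt.continuousWithinAt) fun x _ => hd x
  refine ⟨y, hy, ?_⟩
  rw [hslope, div_mul_eq_mul_div]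
  exact div_pos hc (sub_pos.2 hab)

lemma exists_lt_deriv_mul_pos (hd : ∀ x, HasDerivAt h (h' x) x) (hbot : Tendsto h atBot (𝓝 0))
    {b : ℝ} (hb : h b ≠ 0) : ∃ y < b, 0 < h' y * h b := by
  have hlim : Tendsto (fun x => (h b - h x) * h b) atBot (𝓝 (h b * h b)) := by
    simpa using (hbot.const_sub (h b)).mul_const (h b)
  obtain ⟨a, ha, hab⟩ :=
    ((hlim.eventually_const_lt (mul_self_pos.2 hb)).and (eventually_lt_atBot b)).exists
  obtain ⟨y, hy, hpos⟩ := exists_mem_Ioo_deriv_mul_pos hd hab ha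
  exact ⟨y, hy.2, hpos⟩

lemma exists_gt_deriv_mul_neg (hd : ∀ x, HasDerivAt h (h' x) x) (htop : Tendsto h atTop (𝓝 0))
    {a : ℝ} (ha : h a ≠ 0) : ∃ y > a, h' y * h a < 0 := by
  have hlim : Tendsto (fun x => (h x - h a) * -h a) atTop (𝓝 (h a * h a)) := by
    simpa using (htop.sub_const (h a)).mul_const (-h a)
  obtain ⟨b, hb, hab⟩ :=
    ((hlim.eventually_const_lt (mul_self_pos.2 ha)).and (eventually_gt_atTop a)).exists
  obtain ⟨y, hy, hpos⟩ := exists_mem_Ioo_deriv_mul_pos hd hab hb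
  exact ⟨y, hy.1, by linarith⟩

lemma exists_mem_Ioo_deriv_mul_neg_pos (hd : ∀ x, HasDerivAt h (h' x) x) {a b : ℝ} (hab : a < b)
    (hneg : h a * h b < 0) : ∃ y ∈ Ioo a b, h' y * h a < 0 ∧ 0 < h' y * h b := by
  have hb : h b ≠ 0 := right_ne_zero_of_mul hneg.ne
  have hc : 0 < (h b - h a) * h b := by linarith [mul_self_pos.2 hb, sub_mul (h b) (h a) (h b)]
  obtain ⟨y, hy, hpos⟩ := exists_mem_Ioo_deriv_mul_pos hd hab hc
  exact ⟨y, hy, mul_neg_of_mul_pos_of_mul_neg hpos hneg, hpos⟩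

theorem deriv {n : ℕ} (hd : ∀ x, HasDerivAt h (h' x) x) (hbot : Tendsto h atBot (𝓝 0))
    (htop : Tendsto h atTop (𝓝 0)) (H : HasSignChanges h n) : HasSignChanges h' (n + 1) := by
  obtain ⟨x, hx, h_ne, hneg⟩ := H
  have interlacing (j : Fin (n + 2)) : ∃ y,
      (∀ i : Fin (n + 1), i.castSucc = j → y < x i ∧ 0 < h' y * h (x i)) ∧
      ∀ i : Fin (n + 1), i.succ = j → x i < y ∧ h' y * h (x i) < 0 := by
    cases j using Fin.cases with
    | zero =>
      obtain ⟨y, hy, hpos⟩ := exists_lt_deriv_mul_pos hd hbot (h_ne 0)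
      refine ⟨y, fun i hi => ?_, fun i hi => absurd hi (Fin.succ_ne_zero i)⟩
      obtain rfl : i = 0 := Fin.castSucc_injective _ hi
      exact ⟨hy, hpos⟩
    | succ k =>
      cases k using Fin.lastCases with
      | last =>
        obtain ⟨y, hy, hlt⟩ := exists_gt_deriv_mul_neg hd htop (h_ne (Fin.last n))
        refine ⟨y, fun i hi => absurd hi (Fin.castSucc_ne_last i), fun i hi => ?_⟩
        obtain rfl := Fin.succ_injective _ hi
        exact ⟨hy, hlt⟩
      | cast m =>
        obtain ⟨y, hy, hlt, hpos⟩ :=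
          exists_mem_Ioo_deriv_mul_neg_pos hd (hx m.castSucc_lt_succ) (hneg m)
        refine ⟨y, fun i hi => ?_, fun i hi => ?_⟩
        · obtain rfl : i = m.succ := Fin.castSucc_injective _ hi
          exact ⟨hy.2, hpos⟩
        · obtain rfl := Fin.succ_injective _ hi
          exact ⟨hy.1, hlt⟩
  choose y hbelow habove using interlacing
  have hneg' (i : Fin (n + 1)) : h' (y i.castSucc) * h' (y i.succ) < 0 :=
    mul_neg_of_mul_pos_of_mul_neg (hbelow _ i rfl).2 (habove _ i rfl).2
  refine of_mul_neg ⟨y 0, left_ne_zero_of_mul (hneg' 0).ne⟩ ?_ hneg'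
  exact Fin.strictMono_iff_lt_succ.2 fun i => (hbelow _ i rfl).1.trans (habove _ i rfl).1

end Deriv

end HasSignChanges

section Tail

variable {E : Type*} [NormedAddCommGroup E] [NormedSpace ℝ E] {u : ℝ → E}

lemma hasDerivAt_integral_Ioi [CompleteSpace E] (hu : Integrable u) {k : ℝ}
    (hk : ContinuousAt u k) : HasDerivAt (fun k => ∫ x in Ioi k, u x) (-u k) k := by
  have htail : (fun k => ∫ x in Ioi k, u x) =
      fun k => (∫ x in Ioi 0, u x) - ∫ x in (0 : ℝ)..k, u x := by
    ext k
    rw [← intervalIntegral.integral_Ioi_sub_Ioi' hu.integrableOn hu.integrableOn, sub_sub_cancel]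
  rw [htail]
  exact (intervalIntegral.integral_hasDerivAt_right hu.intervalIntegrable
    hu.aestronglyMeasurable.stronglyMeasurableAtFilter hk).const_sub _

lemma tendsto_integral_Ioi_atBot (hu : Integrable u) :
    Tendsto (fun k => ∫ x in Ioi k, u x) atBot (𝓝 (∫ x, u x)) :=
  (aecover_Ioi tendsto_id).integral_tendsto_of_countably_generated hu

end Tail

section CallPrice

variable {f g : ℝ → ℝ}

lemma integrable_exp_sub_const_mul (hf : Integrable f)
    (hef : Integrable fun x => Real.exp x * f x) (K : ℝ) :
    Integrable fun x => (Real.exp x - K) * f x :=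
  (hef.sub (hf.const_mul K)).congr (.of_forall fun _ => (sub_mul _ _ _).symm)

lemma callPrice_eq_sub (hf : Integrable f) (hef : Integrable fun x => Real.exp x * f x) (K : ℝ) :
    callPrice f K =
      (∫ x in Ioi (Real.log K), Real.exp x * f x) - K * ∫ x in Ioi (Real.log K), f x := by
  simp only [callPrice, sub_mul]
  rw [integral_sub hef.integrableOn (hf.integrableOn.const_mul K), integral_const_mul]

lemma callPrice_sub (hf : Integrable f) (hef : Integrable fun x => Real.exp x * f x)
    (hg : Integrable g) (heg : Integrable fun x => Real.exp x * g x) (K : ℝ) :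
    callPrice (f - g) K = callPrice f K - callPrice g K := by
  simp only [callPrice, Pi.sub_apply, mul_sub]
  exact integral_sub (integrable_exp_sub_const_mul hf hef K).integrableOn
    (integrable_exp_sub_const_mul hg heg K).integrableOn

lemma integrable_exp_mul_of_callPrice_ne_zero (hf : Integrable f) {K : ℝ}
    (hK : callPrice f K ≠ 0) : Integrable fun x => Real.exp x * f x := by
  have hpayoff : IntegrableOn (fun x => (Real.exp x - K) * f x) (Ioi (Real.log K)) :=
    Integrable.of_integral_ne_zero hK
  have hIoi : IntegrableOn (fun x => Real.exp x * f x) (Ioi (Real.log K)) := by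
    simpa only [Pi.add_def, sub_mul, sub_add_cancel] using
      hpayoff.add (hf.integrableOn.const_mul K)
  have hIic : IntegrableOn (fun x => Real.exp x * f x) (Iic (Real.log K)) := by
    refine hf.integrableOn.bdd_mul (c := Real.exp (Real.log K)) (by fun_prop) ?_
    filter_upwards [ae_restrict_mem measurableSet_Iic] with x hx
    rw [Real.norm_of_nonneg (Real.exp_pos x).le]
    exact Real.exp_le_exp.2 hx
  rw [← integrableOn_univ, ← Iic_union_Ioi]
  exact hIic.union hIoi

lemma integral_exp_mul_sub_le_callPrice (hf : Integrable f)
    (hef : Integrable fun x => Real.exp x * f x) (hf_nonneg : ∀ x, 0 ≤ f x) {K : ℝ} (hK : 0 < K) :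
    (∫ x, Real.exp x * f x) - K * ∫ x, f x ≤ callPrice f K := by
  have hint := integrable_exp_sub_const_mul hf hef K
  have hIic : ∫ x in Iic (Real.log K), (Real.exp x - K) * f x ≤ 0 :=
    setIntegral_nonpos measurableSet_Iic fun x hx => mul_nonpos_of_nonpos_of_nonneg
      (sub_nonpos.2 ((Real.le_log_iff_exp_le hK).1 hx)) (hf_nonneg x)
  calc (∫ x, Real.exp x * f x) - K * ∫ x, f x
      = ∫ x, (Real.exp x - K) * f x := by
        simp only [sub_mul]
        rw [integral_sub hef (hf.const_mul K), integral_const_mul]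
    _ = (∫ x in Iic (Real.log K), (Real.exp x - K) * f x) + callPrice f K :=
        (intervalIntegral.integral_Iic_add_Ioi hint.integrableOn hint.integrableOn).symm
    _ ≤ callPrice f K := add_le_of_nonpos_left hIic

lemma tendsto_callPrice_exp_atBot (hf : Integrable f)
    (hef : Integrable fun x => Real.exp x * f x) :
    Tendsto (fun k => callPrice f (Real.exp k)) atBot (𝓝 (∫ x, Real.exp x * f x)) := by
  simp only [callPrice_eq_sub hf hef, Real.log_exp]
  simpa using (tendsto_integral_Ioi_atBot hef).sub
    (Real.tendsto_exp_atBot.mul (tendsto_integral_Ioi_atBot hf))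

lemma tendsto_callPrice_exp_atTop (hef : Integrable fun x => Real.exp x * f x) :
    Tendsto (fun k => callPrice f (Real.exp k)) atTop (𝓝 0) := by
  refine squeeze_zero_norm (fun k => ?_)
    (tendsto_integral_Ioi_zero (f := fun x => ‖Real.exp x * f x‖) (μ := volume) tendsto_id)
  rw [callPrice, Real.log_exp]
  refine norm_integral_le_of_norm_le hef.norm.integrableOn ?_
  filter_upwards [ae_restrict_mem measurableSet_Ioi] with x hx
  have hkx : Real.exp k < Real.exp x := Real.exp_lt_exp.2 hx
  rw [norm_mul, norm_mul, Real.norm_of_nonneg (sub_pos.2 hkx).le,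
    Real.norm_of_nonneg (Real.exp_pos x).le]
  gcongr
  exact sub_le_self _ (Real.exp_pos k).le

lemma hasDerivAt_callPrice_exp (hf : Integrable f) (hef : Integrable fun x => Real.exp x * f x)
    {k : ℝ} (hk : ContinuousAt f k) :
    HasDerivAt (fun k => callPrice f (Real.exp k)) (-Real.exp k * ∫ x in Ioi k, f x) k := by
  simp only [callPrice_eq_sub hf hef, Real.log_exp]
  refine ((hasDerivAt_integral_Ioi hef (by fun_prop)).sub
    ((Real.hasDerivAt_exp k).mul (hasDerivAt_integral_Ioi hf hk))).congr_deriv ?_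
  ring

lemma exists_callPrice_exp_ne_zero (hf_cont : Continuous f) (hf : Integrable f)
    (hef : Integrable fun x => Real.exp x * f x) (h_ne : f ≠ 0) :
    ∃ k, callPrice f (Real.exp k) ≠ 0 := by
  contrapose! h_ne with hprice
  have htail (k : ℝ) : ∫ x in Ioi k, f x = 0 := by
    have hd := hasDerivAt_callPrice_exp hf hef hf_cont.continuousAt (k := k)
    simp only [hprice] at hd
    simpa [Real.exp_ne_zero] using hd.unique (hasDerivAt_const k 0)
  ext k
  have hd := hasDerivAt_integral_Ioi hf hf_cont.continuousAt (k := k)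
  simp only [htail] at hd
  exact neg_eq_zero.1 (hd.unique (hasDerivAt_const k 0))

theorem HasSignChanges.of_callPrice_exp {n : ℕ} (hf_cont : Continuous f) (hf : Integrable f)
    (hef : Integrable fun x => Real.exp x * f x) (hmass : ∫ x, f x = 0)
    (hforward : ∫ x, Real.exp x * f x = 0)
    (H : HasSignChanges (fun k => callPrice f (Real.exp k)) n) : HasSignChanges f (n + 2) := by
  have htail : HasSignChanges (fun k => ∫ x in Ioi k, f x) (n + 1) := by
    refine (H.deriv (fun k => hasDerivAt_callPrice_exp hf hef hf_cont.continuousAt) ?_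
      (tendsto_callPrice_exp_atTop hef)).of_mul_left (c := fun k => -Real.exp k) fun x y => ?_
    · exact hforward ▸ tendsto_callPrice_exp_atBot hf hef
    · rw [neg_mul_neg]
      positivity
  refine .of_mul_left (c := fun _ => -1) (fun _ _ => by norm_num) ?_
  simp only [neg_one_mul]
  exact htail.deriv (fun k => hasDerivAt_integral_Ioi hf hf_cont.continuousAt)
    (hmass ▸ tendsto_integral_Ioi_atBot hf) (tendsto_integral_Ioi_zero tendsto_id)

theorem HasSignChanges.sub_of_callPrice_sub {n : ℕ} (hf_cont : Continuous f)
    (hg_cont : Continuous g) (hf : Integrable f) (hg : Integrable g)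
    (hef : Integrable fun x => Real.exp x * f x) (heg : Integrable fun x => Real.exp x * g x)
    (hmass : ∫ x, f x = ∫ x, g x) (hforward : ∫ x, Real.exp x * f x = ∫ x, Real.exp x * g x)
    (h_ne : f ≠ g) {K : Fin (n + 1) → ℝ} (hK : StrictMono K) (hK_pos : ∀ i, 0 < K i)
    (hneg : ∀ i : Fin n, (callPrice f (K i.castSucc) - callPrice g (K i.castSucc)) *
      (callPrice f (K i.succ) - callPrice g (K i.succ)) < 0) :
    HasSignChanges (f - g) (n + 2) := by
  have hfg_cont : Continuous (f - g) := hf_cont.sub hg_cont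
  have hfg : Integrable (f - g) := hf.sub hg
  have hefg : Integrable fun x => Real.exp x * (f - g) x := by
    simpa only [Pi.sub_apply, mul_sub] using hef.sub' heg
  refine .of_callPrice_exp hfg_cont hfg hefg ?_ ?_ ?_
  · rw [integral_sub' hf hg, hmass, sub_self]
  · simp only [Pi.sub_apply, mul_sub]
    rw [integral_sub hef heg, hforward, sub_self]
  · refine .of_mul_neg (exists_callPrice_exp_ne_zero hfg_cont hfg hefg (sub_ne_zero.2 h_ne))
      (x := fun i => Real.log (K i)) (fun i j hij => Real.log_lt_log (hK_pos i) (hK hij))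
      fun i => ?_
    simpa only [Real.exp_log (hK_pos _), callPrice_sub hf hef hg heg] using hneg i

end CallPrice

section StdNormal

lemma stdNormalCDF_eq_integral (x : ℝ) :
    stdNormalCDF x = ∫ t in Iic x, gaussianPDFReal 0 1 t := by
  simp [stdNormalCDF, gaussianPDFReal, integral_const_mul]

lemma stdNormalCDF_eq_cdf : stdNormalCDF = cdf (gaussianReal 0 1) := by
  ext x
  rw [cdf_eq_real, measureReal_def, gaussianReal_apply_eq_integral 0 one_ne_zero,
    ENNReal.toReal_ofReal (integral_nonneg fun _ => gaussianPDFReal_nonneg _ _ _),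
    stdNormalCDF_eq_integral]

lemma integral_Ioi_gaussianPDFReal (m : ℝ) {v : NNReal} (hv : v ≠ 0) (k : ℝ) :
    ∫ x in Ioi k, gaussianPDFReal m v x = stdNormalCDF ((m - k) / √v) := by
  have hsqrt : 0 < √(v : ℝ) := Real.sqrt_pos.2 (NNReal.coe_pos.2 (pos_iff_ne_zero.2 hv))
  have hmap : (gaussianReal 0 1).map (fun z => m - √v * z) = gaussianReal m v := by
    have hcomp : (fun z => m - √v * z) = (m - ·) ∘ (√v * ·) := rfl
    rw [hcomp, ← Measure.map_map (by fun_prop) (by fun_prop), gaussianReal_map_const_mul,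
      gaussianReal_map_const_sub]
    congr 1
    · simp
    · ext; simp
  have hpre : (fun z => m - √v * z) ⁻¹' Ioi k = Iio ((m - k) / √v) := by
    ext z
    simp only [mem_preimage, mem_Ioi, mem_Iio, lt_div_iff₀ hsqrt, mul_comm z]
    exact lt_sub_comm
  have := nullSingletonClass_gaussianReal (μ := 0) (v := 1) one_ne_zero
  calc ∫ x in Ioi k, gaussianPDFReal m v x
      = (gaussianReal m v).real (Ioi k) := by
        rw [measureReal_def, gaussianReal_apply_eq_integral m hv,
          ENNReal.toReal_ofReal (integral_nonneg fun _ => gaussianPDFReal_nonneg _ _ _)]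
    _ = (gaussianReal 0 1).real (Iio ((m - k) / √v)) := by
        rw [← hmap, map_measureReal_apply (by fun_prop) measurableSet_Ioi, hpre]
    _ = stdNormalCDF ((m - k) / √v) := by
        rw [stdNormalCDF_eq_cdf, cdf_eq_real, measureReal_congr Iio_ae_eq_Iic]

lemma hasDerivAt_stdNormalCDF (x : ℝ) :
    HasDerivAt stdNormalCDF (gaussianPDFReal 0 1 x) x := by
  have hreflect : stdNormalCDF = fun x => ∫ t in Ioi (-x), gaussianPDFReal 0 1 t := by
    ext x
    simp [integral_Ioi_gaussianPDFReal 0 one_ne_zero]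
  have hcont : Continuous (gaussianPDFReal 0 1) := by
    unfold gaussianPDFReal
    fun_prop
  rw [hreflect]
  refine ((hasDerivAt_integral_Ioi (integrable_gaussianPDFReal 0 1)
    hcont.continuousAt).scomp x (hasDerivAt_neg x)).congr_deriv ?_
  simp [gaussianPDFReal]

end StdNormal

section BlackScholes

variable {K s : ℝ}

lemma continuous_phiBS (s : ℝ) : Continuous (phiBS s) := by
  unfold phiBS
  fun_prop

lemma phiBS_eq_gaussianPDFReal (hs : 0 < s) :
    phiBS s = gaussianPDFReal (-(s ^ 2 / 2)) (.mk (s ^ 2) (sq_nonneg s)) := by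
  ext x
  simp only [phiBS, gaussianPDFReal, NNReal.coe_mk]
  rw [Real.sqrt_mul Real.two_pi_pos.le, Real.sqrt_sq hs.le]
  congr 2
  field_simp
  ring

lemma exp_mul_phiBS (hs : 0 < s) (x : ℝ) :
    Real.exp x * phiBS s x = gaussianPDFReal (s ^ 2 / 2) (.mk (s ^ 2) (sq_nonneg s)) x := by
  simp only [phiBS, gaussianPDFReal, NNReal.coe_mk]
  rw [mul_left_comm, ← Real.exp_add, Real.sqrt_mul Real.two_pi_pos.le, Real.sqrt_sq hs.le]
  congr 2
  field_simp
  ring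

lemma nnreal_sq_ne_zero (hs : 0 < s) : NNReal.mk (s ^ 2) (sq_nonneg s) ≠ 0 :=
  NNReal.coe_ne_zero.1 (pow_pos hs 2).ne'

lemma integrable_phiBS (hs : 0 < s) : Integrable (phiBS s) := by
  rw [phiBS_eq_gaussianPDFReal hs]
  exact integrable_gaussianPDFReal _ _

lemma integrable_exp_mul_phiBS (hs : 0 < s) : Integrable fun x => Real.exp x * phiBS s x := by
  simp only [exp_mul_phiBS hs]
  exact integrable_gaussianPDFReal _ _

lemma integral_phiBS (hs : 0 < s) : ∫ x, phiBS s x = 1 := by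
  rw [phiBS_eq_gaussianPDFReal hs]
  exact integral_gaussianPDFReal_eq_one _ (nnreal_sq_ne_zero hs)

lemma integral_exp_mul_phiBS (hs : 0 < s) : ∫ x, Real.exp x * phiBS s x = 1 := by
  simp only [exp_mul_phiBS hs]
  exact integral_gaussianPDFReal_eq_one _ (nnreal_sq_ne_zero hs)

lemma callPrice_phiBS (K : ℝ) (hs : 0 < s) : callPrice (phiBS s) K = callBS K s := by
  have hd₁ : (s ^ 2 / 2 - Real.log K) / s = -Real.log K / s + s / 2 := by
    field_simp
    ring
  have hd₂ : (-(s ^ 2 / 2) - Real.log K) / s = -Real.log K / s - s / 2 := by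
    field_simp
    ring
  rw [callPrice_eq_sub (integrable_phiBS hs) (integrable_exp_mul_phiBS hs)]
  simp only [exp_mul_phiBS hs]
  rw [phiBS_eq_gaussianPDFReal hs, integral_Ioi_gaussianPDFReal _ (nnreal_sq_ne_zero hs),
    integral_Ioi_gaussianPDFReal _ (nnreal_sq_ne_zero hs), NNReal.coe_mk, Real.sqrt_sq hs.le,
    hd₁, hd₂, callBS]

lemma one_sub_le_callBS (hK : 0 < K) (hs : 0 < s) : 1 - K ≤ callBS K s := by
  have hphi_nonneg (x : ℝ) : 0 ≤ phiBS s x := by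
    rw [phiBS_eq_gaussianPDFReal hs]
    exact gaussianPDFReal_nonneg _ _ _
  have hbound := integral_exp_mul_sub_le_callPrice (integrable_phiBS hs)
    (integrable_exp_mul_phiBS hs) hphi_nonneg hK
  rwa [integral_exp_mul_phiBS hs, integral_phiBS hs, mul_one, callPrice_phiBS K hs] at hbound

lemma callBS_le_one (hK : 0 ≤ K) (s : ℝ) : callBS K s ≤ 1 := by
  rw [callBS, stdNormalCDF_eq_cdf]
  exact (sub_le_self _ (mul_nonneg hK (cdf_nonneg _ _))).trans (cdf_le_one _ _)

lemma mul_gaussianPDFReal_eq_gaussianPDFReal (hK : 0 < K) (hs : s ≠ 0) :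
    K * gaussianPDFReal 0 1 (-Real.log K / s - s / 2) =
      gaussianPDFReal 0 1 (-Real.log K / s + s / 2) := by
  conv_lhs => enter [1]; rw [← Real.exp_log hK]
  simp only [gaussianPDFReal]
  rw [mul_left_comm, ← Real.exp_add]
  congr 2
  simp only [NNReal.coe_one]
  field_simp
  ring

lemma hasDerivAt_callBS (hK : 0 < K) (hs : s ≠ 0) :
    HasDerivAt (callBS K) (gaussianPDFReal 0 1 (-Real.log K / s + s / 2)) s := by
  have hdiv : HasDerivAt (fun s => -Real.log K / s) (Real.log K / s ^ 2) s := by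
    simpa [div_eq_mul_inv] using (hasDerivAt_inv hs).const_mul (-Real.log K)
  have hhalf : HasDerivAt (fun s : ℝ => s / 2) (1 / 2) s := (hasDerivAt_id s).div_const 2
  refine (((hasDerivAt_stdNormalCDF _).comp s (hdiv.add hhalf)).sub
    (((hasDerivAt_stdNormalCDF _).comp s (hdiv.sub hhalf)).const_mul K)).congr_deriv ?_
  linear_combination (1 / 2 - Real.log K / s ^ 2) * mul_gaussianPDFReal_eq_gaussianPDFReal hK hs

lemma strictMonoOn_callBS (hK : 0 < K) : StrictMonoOn (callBS K) (Ioi 0) := by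
  refine strictMonoOn_of_hasDerivWithinAt_pos (convex_Ioi 0)
    (fun s hs => (hasDerivAt_callBS hK (ne_of_gt hs)).continuousAt.continuousWithinAt)
    (fun s hs => (hasDerivAt_callBS hK ?_).hasDerivWithinAt)
    fun s _ => gaussianPDFReal_pos 0 1 _ one_ne_zero
  exact ne_of_gt (interior_subset hs)

lemma callBS_sub_mul_sub_pos {r : ℝ} (hK : 0 < K) (hs : 0 < s) (hr : 0 < r) (hsr : s ≠ r) :
    0 < (callBS K s - callBS K r) * (s - r) := by
  rcases hsr.lt_or_gt with h | h
  · exact mul_pos_of_neg_of_neg (sub_neg.2 (strictMonoOn_callBS hK hs hr h)) (sub_neg.2 h)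
  · exact mul_pos (sub_pos.2 (strictMonoOn_callBS hK hr hs h)) (sub_pos.2 h)

lemma callBS_sub_mul_callBS_sub_neg {L r t : ℝ} (hK : 0 < K) (hL : 0 < L) (hs : 0 < s)
    (ht : 0 < t) (hr : 0 < r) (hneg : (s - r) * (t - r) < 0) :
    (callBS K s - callBS K r) * (callBS L t - callBS L r) < 0 := by
  have hKpos := callBS_sub_mul_sub_pos hK hs hr (sub_ne_zero.1 (left_ne_zero_of_mul hneg.ne))
  have hLpos := callBS_sub_mul_sub_pos hL ht hr (sub_ne_zero.1 (right_ne_zero_of_mul hneg.ne))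
  rw [mul_comm] at hneg ⊢
  exact mul_neg_of_mul_pos_of_mul_neg hLpos (mul_neg_of_mul_pos_of_mul_neg hKpos hneg)

end BlackScholes

section Smile

variable {f σ : ℝ → ℝ}

lemma integrable_exp_mul_of_smile (hf : Integrable f) (hσ : ∀ K, 0 < K → 0 < σ K)
    (hIV : ∀ K, 0 < K → callPrice f K = callBS K (σ K)) :
    Integrable fun x => Real.exp x * f x := by
  have hhalf : (0 : ℝ) < 1 / 2 := by norm_num
  refine integrable_exp_mul_of_callPrice_ne_zero hf (K := 1 / 2) ?_
  rw [hIV _ hhalf]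
  linarith [one_sub_le_callBS hhalf (hσ _ hhalf)]

lemma integral_exp_mul_eq_one_of_smile (hf : Integrable f) (hσ : ∀ K, 0 < K → 0 < σ K)
    (hIV : ∀ K, 0 < K → callPrice f K = callBS K (σ K)) : ∫ x, Real.exp x * f x = 1 := by
  refine tendsto_nhds_unique
    (tendsto_callPrice_exp_atBot hf (integrable_exp_mul_of_smile hf hσ hIV)) ?_
  simp only [hIV _ (Real.exp_pos _)]
  refine tendsto_of_tendsto_of_tendsto_of_le_of_le
    (by simpa using Real.tendsto_exp_atBot.const_sub 1) tendsto_const_nhds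
    (fun k => one_sub_le_callBS (Real.exp_pos k) (hσ _ (Real.exp_pos k)))
    fun k => callBS_le_one (Real.exp_pos k).le _

end Smile

theorem smile_sign_changes_le_density_crossings_general
    (f σ : ℝ → ℝ) (σstar : ℝ)
    (hf_cont : Continuous f)
    (hf_int : Integrable f) (hf_prob : ∫ x, f x = 1)
    (hσ_pos : ∀ K, 0 < K → 0 < σ K)
    (hIV : ∀ K, 0 < K → callPrice f K = callBS K (σ K))
    (hσstar : 0 < σstar)
    (h_ne : f ≠ phiBS σstar) :
    ∀ n : ℕ,
      (∃ K : Fin (n + 1) → ℝ, StrictMono K ∧ 0 < K 0 ∧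
        ∀ i : Fin n, (σ (K i.castSucc) - σstar) * (σ (K i.succ) - σstar) < 0) →
      (∃ x : Fin (n + 3) → ℝ, StrictMono x ∧
        ∀ j : Fin (n + 2), (f (x j.castSucc) - phiBS σstar (x j.castSucc)) *
          (f (x j.succ) - phiBS σstar (x j.succ)) < 0) := by
  rintro n ⟨K, hK, hK0, hneg⟩
  have hK_pos (i) : 0 < K i := hK0.trans_le (hK.monotone (Fin.zero_le i))
  have hprice_neg (i : Fin n) :
      (callPrice f (K i.castSucc) - callPrice (phiBS σstar) (K i.castSucc)) *
        (callPrice f (K i.succ) - callPrice (phiBS σstar) (K i.succ)) < 0 := by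
    simp only [hIV _ (hK_pos _), callPrice_phiBS _ hσstar]
    exact callBS_sub_mul_callBS_sub_neg (hK_pos _) (hK_pos _) (hσ_pos _ (hK_pos _))
      (hσ_pos _ (hK_pos _)) hσstar (hneg i)
  have hmass : ∫ x, f x = ∫ x, phiBS σstar x := by rw [hf_prob, integral_phiBS hσstar]
  have hforward : ∫ x, Real.exp x * f x = ∫ x, Real.exp x * phiBS σstar x := by
    rw [integral_exp_mul_eq_one_of_smile hf_int hσ_pos hIV, integral_exp_mul_phiBS hσstar]
  obtain ⟨x, hx, -, hx_neg⟩ := HasSignChanges.sub_of_callPrice_sub hf_cont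
    (continuous_phiBS σstar) hf_int (integrable_phiBS hσstar)
    (integrable_exp_mul_of_smile hf_int hσ_pos hIV) (integrable_exp_mul_phiBS hσstar)
    hmass hforward h_ne hK hK_pos hprice_neg
  exact ⟨x, hx, hx_neg⟩

/-- **Sign changes of the smile are bounded by density crossings** (Prop. 2.1 of
Glasserman–Pirjol): if `σ − σ_*` has at least `n` sign changes, then `f − φ_{σ_*}` has at
least `n + 2` sign changes, provided `f` and `φ_{σ_*}` differ on some nonempty open
interval. -/
theorem smile_sign_changes_le_density_crossings
    (f σ : ℝ → ℝ) (σstar : ℝ)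
    (hf_cont : Continuous f) (hf_nonneg : ∀ x, 0 ≤ f x)
    (hf_int : Integrable f) (hf_prob : ∫ x, f x = 1)
    (hσ_cont : ContinuousOn σ (Set.Ioi 0))
    (hσ_pos : ∀ K, 0 < K → 0 < σ K)
    (hIV : ∀ K, 0 < K → callPrice f K = callBS K (σ K))
    (hσstar : 0 < σstar)
    (hI : ∃ x1 x2 : ℝ, x1 < x2 ∧ ∀ x ∈ Set.Ioo x1 x2, f x ≠ phiBS σstar x) :
    ∀ n : ℕ,
      (∃ K : Fin (n + 1) → ℝ, StrictMono K ∧ 0 < K 0 ∧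
        ∀ i : Fin n, (σ (K i.castSucc) - σstar) * (σ (K i.succ) - σstar) < 0) →
      (∃ x : Fin (n + 3) → ℝ, StrictMono x ∧
        ∀ j : Fin (n + 2), (f (x j.castSucc) - phiBS σstar (x j.castSucc)) *
          (f (x j.succ) - phiBS σstar (x j.succ)) < 0) := by
  obtain ⟨x1, x2, h12, hx⟩ := hI
  obtain ⟨x, hx_mem⟩ := exists_between h12
  exact smile_sign_changes_le_density_crossings_general f σ σstar hf_cont hf_int hf_prob hσ_pos hIV
    hσstar (Function.ne_iff.2 ⟨x, hx x hx_mem⟩)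
end
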